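/- Let φ = φ(x) be an S5_FOL formula with one free variable that is bisimulation invariant and ℓ-local. Then φ is ≈_{2ℓ+1}-invariant: if I,w,d ≈_{2ℓ+1} J,v,e then I,w,d ⊨ φ if and only if J,v,e ⊨ φ. -/

import Mathlib

/-! Core definitions: S5-interpretations, S5^loc_ALC concepts, S5_FOL formulas,
    bisimulations, games, Gaifman locality, unravellings, normal forms,
    and the two-sorted correspondence language. -/

/-- An S5-interpretation: nonempty sets of worlds and individuals, and for each
world an ALC interpretation of concept and role names. -/
structure S5Interp (NC NR : Type) : Type 1 where
  W : Type
  Δ : Type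
  W_nonempty : Nonempty W
  Δ_nonempty : Nonempty Δ
  conc : NC → W → Set Δ
  role : NR → W → Set (Δ × Δ)

variable {NC NR : Type}

/-- Concepts of S5^loc_ALC : C ::= A | ¬C | C ⊓ D | ∃r.C | □C. -/
inductive DLConcept (NC NR : Type) : Type where
  | atom : NC → DLConcept NC NR
  | neg  : DLConcept NC NR → DLConcept NC NR
  | and  : DLConcept NC NR → DLConcept NC NR → DLConcept NC NR
  | ex   : NR → DLConcept NC NR → DLConcept NC NR
  | box  : DLConcept NC NR → DLConcept NC NR

/-- ◇C := ¬□¬C. -/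
def DLConcept.dia (C : DLConcept NC NR) : DLConcept NC NR := .neg (.box (.neg C))

/-- Satisfaction I,w,d ⊨ C. -/
def DLConcept.Sat (I : S5Interp NC NR) : I.W → I.Δ → DLConcept NC NR → Prop
  | w, d, .atom A  => d ∈ I.conc A w
  | w, d, .neg C   => ¬ DLConcept.Sat I w d C
  | w, d, .and C D => DLConcept.Sat I w d C ∧ DLConcept.Sat I w d D
  | w, d, .ex r C  => ∃ e, (d, e) ∈ I.role r w ∧ DLConcept.Sat I w e C
  | _, d, .box C   => ∀ v, DLConcept.Sat I v d C

/-- Rank of a concept: maximal nesting depth of □ and ∃r. -/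
def DLConcept.rank : DLConcept NC NR → ℕ
  | .atom _  => 0
  | .neg C   => C.rank
  | .and C D => max C.rank D.rank
  | .ex _ C  => C.rank + 1
  | .box C   => C.rank + 1

/-- Formulas of S5-modalized first-order logic over the correspondence
language (variables are natural numbers). -/
inductive FOForm (NC NR : Type) : Type where
  | conc : NC → ℕ → FOForm NC NR
  | role : NR → ℕ → ℕ → FOForm NC NR
  | eq   : ℕ → ℕ → FOForm NC NR
  | neg  : FOForm NC NR → FOForm NC NR
  | and  : FOForm NC NR → FOForm NC NR → FOForm NC NR
  | ex   : ℕ → FOForm NC NR → FOForm NC NR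
  | box  : FOForm NC NR → FOForm NC NR

/-- Satisfaction I,w,η ⊨ φ for S5_FOL. -/
def FOForm.Sat (I : S5Interp NC NR) : I.W → (ℕ → I.Δ) → FOForm NC NR → Prop
  | w, η, .conc A x   => η x ∈ I.conc A w
  | w, η, .role r x y => (η x, η y) ∈ I.role r w
  | _, η, .eq x y     => η x = η y
  | w, η, .neg φ      => ¬ FOForm.Sat I w η φ
  | w, η, .and φ ψ    => FOForm.Sat I w η φ ∧ FOForm.Sat I w η ψ
  | w, η, .ex x φ     => ∃ d, FOForm.Sat I w (Function.update η x d) φ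
  | _, η, .box φ      => ∀ v, FOForm.Sat I v η φ

/-- Rank of a formula: maximal nesting depth of □ and ∃. -/
def FOForm.rank : FOForm NC NR → ℕ
  | .conc _ _   => 0
  | .role _ _ _ => 0
  | .eq _ _     => 0
  | .neg φ      => φ.rank
  | .and φ ψ    => max φ.rank ψ.rank
  | .ex _ φ     => φ.rank + 1
  | .box φ      => φ.rank + 1

/-- Free variables of a formula. -/
def FOForm.freeVars : FOForm NC NR → Set ℕ
  | .conc _ x   => {x}
  | .role _ x y => {x, y}
  | .eq x y     => {x, y}
  | .neg φ      => φ.freeVars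
  | .and φ ψ    => φ.freeVars ∪ ψ.freeVars
  | .ex x φ     => φ.freeVars \ {x}
  | .box φ      => φ.freeVars

/-- The standard translation ST_x, using x+1 as the fresh variable for
existential restrictions. -/
def standardTranslation : ℕ → DLConcept NC NR → FOForm NC NR
  | x, .atom A  => .conc A x
  | x, .neg C   => .neg (standardTranslation x C)
  | x, .and C D => .and (standardTranslation x C) (standardTranslation x D)
  | x, .ex r C  => .ex (x+1) (.and (.role r x (x+1)) (standardTranslation (x+1) C))
  | x, .box C   => .box (standardTranslation x C)

/-- Bisimulations between S5-interpretations. -/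
def IsBisimulation (I J : S5Interp NC NR)
    (R : (I.W × I.Δ) → (J.W × J.Δ) → Prop) : Prop :=
  ∀ w d v e, R (w, d) (v, e) →
    (∀ A : NC, d ∈ I.conc A w ↔ e ∈ J.conc A v) ∧
    (∀ w', ∃ v', R (w', d) (v', e)) ∧
    (∀ v', ∃ w', R (w', d) (v', e)) ∧
    (∀ (r : NR) d', (d, d') ∈ I.role r w → ∃ e', (e, e') ∈ J.role r v ∧ R (w, d') (v, e')) ∧
    (∀ (r : NR) e', (e, e') ∈ J.role r v → ∃ d', (d, d') ∈ I.role r w ∧ R (w, d') (v, e'))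

/-- I,w,d ≈ J,v,e : some bisimulation relates (w,d) and (v,e). -/
def Bisimilar (I J : S5Interp NC NR) (w : I.W) (d : I.Δ) (v : J.W) (e : J.Δ) : Prop :=
  ∃ R, IsBisimulation I J R ∧ R (w, d) (v, e)

/-- Depth-n bisimilarity ≈ₙ (Duplicator wins the n-round bisimulation game). -/
def BisimAtDepth (I J : S5Interp NC NR) : ℕ → I.W → I.Δ → J.W → J.Δ → Prop
  | 0, w, d, v, e => ∀ A : NC, d ∈ I.conc A w ↔ e ∈ J.conc A v
  | n+1, w, d, v, e =>
      (∀ A : NC, d ∈ I.conc A w ↔ e ∈ J.conc A v) ∧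
      (∀ w', ∃ v', BisimAtDepth I J n w' d v' e) ∧
      (∀ v', ∃ w', BisimAtDepth I J n w' d v' e) ∧
      (∀ (r : NR) d', (d, d') ∈ I.role r w →
        ∃ e', (e, e') ∈ J.role r v ∧ BisimAtDepth I J n w d' v e') ∧
      (∀ (r : NR) e', (e, e') ∈ J.role r v →
        ∃ d', (d, d') ∈ I.role r w ∧ BisimAtDepth I J n w d' v e')

/-- Atomic agreement of two configurations. -/
def AltAtom (I J : S5Interp NC NR) (w : I.W) (d : I.Δ) (v : J.W) (e : J.Δ) : Prop :=
  ∀ A : NC, d ∈ I.conc A w ↔ e ∈ J.conc A v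

/-- One pair of Δ-moves (in either interpretation), continuing with `P`. -/
def AltDelta (I J : S5Interp NC NR) (P : I.W → I.Δ → J.W → J.Δ → Prop)
    (w : I.W) (d : I.Δ) (v : J.W) (e : J.Δ) : Prop :=
  (∀ (r : NR) d', (d, d') ∈ I.role r w → ∃ e', (e, e') ∈ J.role r v ∧ P w d' v e') ∧
  (∀ (r : NR) e', (e, e') ∈ J.role r v → ∃ d', (d, d') ∈ I.role r w ∧ P w d' v e')

/-- Duplicator wins the n-round alternating bisimulation game (each round:
an optional pair of W-moves followed by a mandatory pair of Δ-moves; one extra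
optional pair of W-moves may be played at the very end). -/
def AltBisim (I J : S5Interp NC NR) : ℕ → I.W → I.Δ → J.W → J.Δ → Prop
  | 0, w, d, v, e =>
      AltAtom I J w d v e ∧
      (∀ w', ∃ v', AltAtom I J w' d v' e) ∧
      (∀ v', ∃ w', AltAtom I J w' d v' e)
  | n+1, w, d, v, e =>
      AltAtom I J w d v e ∧
      AltDelta I J (AltBisim I J n) w d v e ∧
      (∀ w', ∃ v', AltAtom I J w' d v' e ∧ AltDelta I J (AltBisim I J n) w' d v' e) ∧
      (∀ v', ∃ w', AltAtom I J w' d v' e ∧ AltDelta I J (AltBisim I J n) w' d v' e)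

/-- Winning strategies in the unbounded alternating bisimulation game,
presented as relations closed under the game conditions. -/
def IsAltBisimulation (I J : S5Interp NC NR)
    (R : (I.W × I.Δ) → (J.W × J.Δ) → Prop) : Prop :=
  ∀ w d v e, R (w, d) (v, e) →
    AltAtom I J w d v e ∧
    AltDelta I J (fun w' d' v' e' => R (w', d') (v', e')) w d v e ∧
    (∀ w', ∃ v', AltAtom I J w' d v' e ∧
      AltDelta I J (fun a b c f => R (a, b) (c, f)) w' d v' e) ∧
    (∀ v', ∃ w', AltAtom I J w' d v' e ∧
      AltDelta I J (fun a b c f => R (a, b) (c, f)) w' d v' e)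

/-- I,w,d ≈^alt J,v,e : Duplicator wins the unbounded alternating game. -/
def AltBisimilar (I J : S5Interp NC NR) (w : I.W) (d : I.Δ) (v : J.W) (e : J.Δ) : Prop :=
  ∃ R, IsAltBisimulation I J R ∧ R (w, d) (v, e)

/-- Partial isomorphism between configurations of the S5-Ehrenfeucht–Fraïssé game. -/
def PartialIso (I J : S5Interp NC NR) {k : ℕ} (w : I.W) (v : J.W)
    (ds : Fin k → I.Δ) (es : Fin k → J.Δ) : Prop :=
  (∀ i j, ds i = ds j ↔ es i = es j) ∧
  (∀ (A : NC) i, ds i ∈ I.conc A w ↔ es i ∈ J.conc A v) ∧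
  (∀ (r : NR) i j, (ds i, ds j) ∈ I.role r w ↔ (es i, es j) ∈ J.role r v)

/-- S5-Ehrenfeucht–Fraïssé equivalence up to depth n (Duplicator wins the
n-round EF game). -/
def EFEquiv (I J : S5Interp NC NR) :
    ℕ → (k : ℕ) → I.W → (Fin k → I.Δ) → J.W → (Fin k → J.Δ) → Prop
  | 0, _, w, ds, v, es => PartialIso I J w v ds es
  | n+1, k, w, ds, v, es =>
      PartialIso I J w v ds es ∧
      (∀ w', ∃ v', EFEquiv I J n k w' ds v' es) ∧
      (∀ v', ∃ w', EFEquiv I J n k w' ds v' es) ∧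
      (∀ d, ∃ e, EFEquiv I J n (k+1) w (Fin.snoc ds d) v (Fin.snoc es e)) ∧
      (∀ e, ∃ d, EFEquiv I J n (k+1) w (Fin.snoc ds d) v (Fin.snoc es e))

/-- Adjacency in the Gaifman graph of an S5-interpretation. -/
def GaifmanAdj (I : S5Interp NC NR) (d e : I.Δ) : Prop :=
  d ≠ e ∧ ∃ (r : NR) (w : I.W), (d, e) ∈ I.role r w ∨ (e, d) ∈ I.role r w

/-- The radius-ℓ neighbourhood U^ℓ(d) of d in the Gaifman graph
(the set of elements at Gaifman distance at most ℓ from d). -/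
def GaifmanBall (I : S5Interp NC NR) (d : I.Δ) : ℕ → Set I.Δ
  | 0 => {d}
  | ℓ+1 => GaifmanBall I d ℓ ∪ {e | ∃ e' ∈ GaifmanBall I d ℓ, GaifmanAdj I e' e}

lemma mem_gaifmanBall_self (I : S5Interp NC NR) (d : I.Δ) (ℓ : ℕ) :
    d ∈ GaifmanBall I d ℓ := by
  induction ℓ with
  | zero => simp [GaifmanBall]
  | succ n ih => exact Set.mem_union_left _ ih

/-- Restriction I|_U of an S5-interpretation to a nonempty subset U of its domain. -/
def S5Interp.restrict (I : S5Interp NC NR) (U : Set I.Δ) (hU : U.Nonempty) :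
    S5Interp NC NR where
  W := I.W
  Δ := ↥U
  W_nonempty := I.W_nonempty
  Δ_nonempty := hU.to_subtype
  conc A w := {x | (x : I.Δ) ∈ I.conc A w}
  role r w := {p | ((p.1 : I.Δ), (p.2 : I.Δ)) ∈ I.role r w}

/-- Restriction I|_{U^ℓ(d)} to the radius-ℓ Gaifman neighbourhood of d. -/
def S5Interp.ballRestrict (I : S5Interp NC NR) (d : I.Δ) (ℓ : ℕ) : S5Interp NC NR :=
  I.restrict (GaifmanBall I d ℓ) ⟨d, mem_gaifmanBall_self I d ℓ⟩

/-- The point d viewed inside I|_{U^ℓ(d)}. -/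
def S5Interp.ballPt (I : S5Interp NC NR) (d : I.Δ) (ℓ : ℕ) : (I.ballRestrict d ℓ).Δ :=
  ⟨d, mem_gaifmanBall_self I d ℓ⟩

/-- A formula φ with (single) free variable x is ℓ-local if its truth at d only
depends on the restriction of the interpretation to U^ℓ(d). -/
def IsLocal (φ : FOForm NC NR) (x : ℕ) (ℓ : ℕ) : Prop :=
  ∀ (I : S5Interp NC NR) (w : I.W) (d : I.Δ)
    (η : ℕ → I.Δ) (θ : ℕ → (I.ballRestrict d ℓ).Δ),
    η x = d → (θ x).val = d →
    (FOForm.Sat I w η φ ↔ FOForm.Sat (I.ballRestrict d ℓ) w θ φ)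

/-- φ (with single free variable x) is bisimulation invariant. -/
def BisimInvariant (φ : FOForm NC NR) (x : ℕ) : Prop :=
  ∀ (I J : S5Interp NC NR) (w : I.W) (d : I.Δ) (v : J.W) (e : J.Δ),
    Bisimilar I J w d v e →
    ∀ (η : ℕ → I.Δ) (θ : ℕ → J.Δ), η x = d → θ x = e →
      (FOForm.Sat I w η φ ↔ FOForm.Sat J v θ φ)

/-- φ (with single free variable x) is bisimulation invariant over finite
S5-interpretations. -/
def BisimInvariantFin (φ : FOForm NC NR) (x : ℕ) : Prop :=
  ∀ (I J : S5Interp NC NR), Finite I.W → Finite I.Δ → Finite J.W → Finite J.Δ →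
    ∀ (w : I.W) (d : I.Δ) (v : J.W) (e : J.Δ),
    Bisimilar I J w d v e →
    ∀ (η : ℕ → I.Δ) (θ : ℕ → J.Δ), η x = d → θ x = e →
      (FOForm.Sat I w η φ ↔ FOForm.Sat J v θ φ)

/-- One step along some role at some world (the edge relation used in tree unravellings). -/
def roleStep (I : S5Interp NC NR) (a b : I.Δ) : Prop :=
  ∃ (r : NR) (w : I.W), (a, b) ∈ I.role r w

/-- Paths from d₀: a path (d₀,d₁,…,d_k) is encoded by its tail list (d₁,…,d_k). -/
def UPath (I : S5Interp NC NR) (d0 : I.Δ) : Type :=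
  { l : List I.Δ // List.Chain (roleStep I) d0 l }

/-- π : the last entry of a path. -/
def UPath.last {I : S5Interp NC NR} {d0 : I.Δ} (p : UPath I d0) : I.Δ :=
  (d0 :: p.val).getLast (by simp)

/-- The tree unravelling I*_{d₀}. -/
def S5Interp.unravel (I : S5Interp NC NR) (d0 : I.Δ) : S5Interp NC NR where
  W := I.W
  Δ := UPath I d0
  W_nonempty := I.W_nonempty
  Δ_nonempty := ⟨⟨[], List.Chain.nil⟩⟩
  conc A w := {p | p.last ∈ I.conc A w}
  role r w := {q | ∃ d, (q.1.last, d) ∈ I.role r w ∧ q.2.val = q.1.val ++ [d]}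

/-- Paths from d₀ of length at most ℓ. -/
def PPath (I : S5Interp NC NR) (d0 : I.Δ) (ℓ : ℕ) : Type :=
  { l : List I.Δ // List.Chain (roleStep I) d0 l ∧ l.length ≤ ℓ }

def PPath.last {I : S5Interp NC NR} {d0 : I.Δ} {ℓ : ℕ} (p : PPath I d0 ℓ) : I.Δ :=
  (d0 :: p.val).getLast (by simp)

/-- The map ρ of the partial unravelling: a surviving path goes to its last
entry, an element of the fresh copy of I to itself. -/
def punravelProj (I : S5Interp NC NR) (d0 : I.Δ) (ℓ : ℕ) :
    PPath I d0 ℓ ⊕ I.Δ → I.Δ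
  | Sum.inl p => p.last
  | Sum.inr d => d

/-- The partial unravelling of I at d₀ up to level ℓ: the tree unravelling
restricted to the radius-(ℓ+1) Gaifman neighbourhood of the root, with each
leaf path at distance ℓ+1 identified with its last entry in a fresh disjoint
copy of I. -/
def S5Interp.partialUnravel (I : S5Interp NC NR) (d0 : I.Δ) (ℓ : ℕ) :
    S5Interp NC NR where
  W := I.W
  Δ := PPath I d0 ℓ ⊕ I.Δ
  W_nonempty := I.W_nonempty
  Δ_nonempty := ⟨Sum.inl ⟨[], List.Chain.nil, Nat.zero_le _⟩⟩
  conc A w := {x | punravelProj I d0 ℓ x ∈ I.conc A w}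
  role r w := fun q =>
    match q with
    | (Sum.inl p, Sum.inl p') => ∃ d, (p.last, d) ∈ I.role r w ∧ p'.val = p.val ++ [d]
    | (Sum.inl p, Sum.inr d) => p.val.length = ℓ ∧ (p.last, d) ∈ I.role r w
    | (Sum.inr _, Sum.inl _) => False
    | (Sum.inr d, Sum.inr d') => (d, d') ∈ I.role r w

/-! Normal forms, over the finite signature N_C = {A_0,…,A_s}, N_R = {r_0,…,r_{t-1}}. -/

/-- Conjunction of a list of concepts (the empty conjunction is ⊤, encoded as
¬(A₀ ⊓ ¬A₀); it is never used since atom lists are nonempty). -/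
def bigConj (s t : ℕ) : List (DLConcept (Fin (s+1)) (Fin t)) → DLConcept (Fin (s+1)) (Fin t)
  | [] => .neg (.and (.atom 0) (.neg (.atom 0)))
  | [C] => C
  | C :: D :: L => .and C (bigConj s t (D :: L))

/-- Disjunction of a list of concepts (the empty disjunction is ⊥ = A₀ ⊓ ¬A₀). -/
def bigDisj (s t : ℕ) : List (DLConcept (Fin (s+1)) (Fin t)) → DLConcept (Fin (s+1)) (Fin t)
  | [] => .and (.atom 0) (.neg (.atom 0))
  | [C] => C
  | C :: D :: L => .neg (.and (.neg C) (.neg (bigDisj s t (D :: L))))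

/-- All lists obtained from a given list of atoms by choosing a sign
(nothing or negation) for each atom, in order. -/
def signedAll (s t : ℕ) :
    List (DLConcept (Fin (s+1)) (Fin t)) → List (List (DLConcept (Fin (s+1)) (Fin t)))
  | [] => [[]]
  | B :: L =>
      ((signedAll s t L).map (fun T => B :: T)) ++
      ((signedAll s t L).map (fun T => DLConcept.neg B :: T))

/-- The atoms of rank k, given the list of normal forms of rank k−1:
at_k = N_C ∪ {∃r.C | C ∈ nf_{k−1}} ∪ {◇C | C ∈ nf_{k−1}} (in a fixed order). -/
def atomsOf (s t : ℕ) (prev : List (DLConcept (Fin (s+1)) (Fin t))) :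
    List (DLConcept (Fin (s+1)) (Fin t)) :=
  ((List.finRange (s+1)).map DLConcept.atom)
    ++ ((List.finRange t).flatMap (fun r => prev.map (DLConcept.ex r)))
    ++ (prev.map DLConcept.dia)

/-- The normal forms of rank k (as a list enumerating the set nf_k in a fixed
order): all signed conjunctions over the atoms of rank k, where nf_{−1} = ∅. -/
def nfList (s t : ℕ) : ℕ → List (DLConcept (Fin (s+1)) (Fin t))
  | 0 => (signedAll s t (atomsOf s t [])).map (bigConj s t)
  | k+1 => (signedAll s t (atomsOf s t (nfList s t k))).map (bigConj s t)

/-! The two-sorted correspondence language SL. -/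

/-- Formulas of the two-sorted first-order language SL (domain variables and
world variables are natural numbers; each predicate takes one extra
world-sort argument). -/
inductive SLForm (NC NR : Type) : Type where
  | conc : NC → ℕ → ℕ → SLForm NC NR        -- A(x, v)
  | role : NR → ℕ → ℕ → ℕ → SLForm NC NR    -- r(x, y, v)
  | eqD  : ℕ → ℕ → SLForm NC NR             -- x = y (domain sort)
  | eqW  : ℕ → ℕ → SLForm NC NR             -- v = u (world sort)
  | neg  : SLForm NC NR → SLForm NC NR
  | and  : SLForm NC NR → SLForm NC NR → SLForm NC NR
  | exD  : ℕ → SLForm NC NR → SLForm NC NR  -- ∃x (domain sort)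
  | exW  : ℕ → SLForm NC NR → SLForm NC NR  -- ∃v (world sort)

/-- Satisfaction for SL over S5-interpretations, with a domain valuation η and
a world valuation ξ. -/
def SLForm.Sat (I : S5Interp NC NR) : (ℕ → I.Δ) → (ℕ → I.W) → SLForm NC NR → Prop
  | η, ξ, .conc A x v   => η x ∈ I.conc A (ξ v)
  | η, ξ, .role r x y v => (η x, η y) ∈ I.role r (ξ v)
  | η, _, .eqD x y      => η x = η y
  | _, ξ, .eqW v u      => ξ v = ξ u
  | η, ξ, .neg φ        => ¬ SLForm.Sat I η ξ φ
  | η, ξ, .and φ ψ      => SLForm.Sat I η ξ φ ∧ SLForm.Sat I η ξ ψ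
  | η, ξ, .exD x φ      => ∃ d, SLForm.Sat I (Function.update η x d) ξ φ
  | η, ξ, .exW v φ      => ∃ u, SLForm.Sat I η (Function.update ξ v u) φ

/-- Free domain-sort variables of an SL formula. -/
def SLForm.freeDVars : SLForm NC NR → Set ℕ
  | .conc _ x _   => {x}
  | .role _ x y _ => {x, y}
  | .eqD x y      => {x, y}
  | .eqW _ _      => ∅
  | .neg φ        => φ.freeDVars
  | .and φ ψ      => φ.freeDVars ∪ ψ.freeDVars
  | .exD x φ      => φ.freeDVars \ {x}
  | .exW _ φ      => φ.freeDVars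

/-- Free world-sort variables of an SL formula. -/
def SLForm.freeWVars : SLForm NC NR → Set ℕ
  | .conc _ _ v   => {v}
  | .role _ _ _ v => {v}
  | .eqD _ _      => ∅
  | .eqW v u      => {v, u}
  | .neg φ        => φ.freeWVars
  | .and φ ψ      => φ.freeWVars ∪ ψ.freeWVars
  | .exD _ φ      => φ.freeWVars
  | .exW v φ      => φ.freeWVars \ {v}

/-- The translation (−)^{†_v} of S5_FOL into SL: predicates get the world
variable v as extra argument, and □ becomes universal quantification over v. -/
def dagger (v : ℕ) : FOForm NC NR → SLForm NC NR
  | .conc A x   => .conc A x v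
  | .role r x y => .role r x y v
  | .eq x y     => .eqD x y
  | .neg φ      => .neg (dagger v φ)
  | .and φ ψ    => .and (dagger v φ) (dagger v ψ)
  | .ex x φ     => .exD x (dagger v φ)
  | .box φ      => .neg (.exW v (.neg (dagger v φ)))

/-- Extension of a path by one role step. -/
lemma uPath_snoc {NC NR : Type} {I : S5Interp NC NR} {d0 : I.Δ} (p : UPath I d0) (d : I.Δ)
    (h : roleStep I p.last d) : List.IsChain (roleStep I) (d0 :: (p.val ++ [d])) := by
  have h1 : List.IsChain (roleStep I) (d0 :: p.val) := p.property
  rw [← List.cons_append, List.isChain_append]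
  refine ⟨h1, by simp, ?_⟩
  intro a ha b hb
  rw [List.getLast?_eq_getLast_of_ne_nil (by simp)] at ha
  simp only [Option.mem_def, Option.some.injEq, List.head?_cons] at ha hb
  subst hb
  rw [← ha]
  exact h

lemma uPath_last_of_eq {NC NR : Type} {I : S5Interp NC NR} {d0 : I.Δ} (p : UPath I d0)
    (l : List I.Δ) (d : I.Δ) (h : p.val = l ++ [d]) : p.last = d := by
  unfold UPath.last
  simp [h]

def uRoot {NC NR : Type} (I : S5Interp NC NR) (d0 : I.Δ) : (I.unravel d0).Δ :=
  (⟨[], List.Chain.nil⟩ : UPath I d0)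

lemma bisimilar_unravel {NC NR : Type} (I : S5Interp NC NR) (w : I.W) (d : I.Δ) :
    Bisimilar I (I.unravel d) w d w (uRoot I d) := by
  refine ⟨fun a b => a.1 = b.1 ∧ a.2 = UPath.last b.2, ?_, rfl, rfl⟩
  rintro w a v p ⟨h1, h2⟩
  change w = v at h1
  change a = UPath.last p at h2
  subst h1
  subst h2
  refine ⟨fun A => Iff.rfl, fun w' => ⟨w', rfl, rfl⟩, fun w' => ⟨w', rfl, rfl⟩, ?_, ?_⟩
  · intro r d' hd
    have hc := uPath_snoc p d' ⟨r, w, hd⟩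
    exact ⟨(⟨p.val ++ [d'], hc⟩ : UPath I d), ⟨d', hd, rfl⟩, rfl,
      (uPath_last_of_eq _ _ _ rfl).symm⟩
  · rintro r q ⟨d', hd, hq⟩
    exact ⟨d', hd, rfl, (uPath_last_of_eq _ _ _ hq).symm⟩

lemma length_le_of_mem_ball {NC NR : Type} (I : S5Interp NC NR) (d : I.Δ) (ℓ : ℕ)
    (p : UPath I d) (hp : p ∈ GaifmanBall (I.unravel d) (uRoot I d) ℓ) : p.val.length ≤ ℓ := by
  induction ℓ generalizing p with
  | zero =>
    have : p = uRoot I d := hp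
    subst this
    simp [uRoot]
  | succ n ih =>
    rcases hp with hp | ⟨q, hq, -, r, w, h | h⟩
    · exact (ih p hp).trans (Nat.le_succ n)
    · obtain ⟨c, -, hc⟩ := h
      have := ih q hq
      have hc : p.val = q.val ++ [c] := hc
      rw [hc]
      simpa using this
    · obtain ⟨c, -, hc⟩ := h
      have h2 := ih q hq
      have hc : q.val = p.val ++ [c] := hc
      rw [hc] at h2
      simp at h2
      omega

/-- Paths of length at most ℓ lie in the radius-ℓ ball around the root. -/
lemma mem_ball_of_length {NC NR : Type} (I : S5Interp NC NR) (d : I.Δ) (ℓ : ℕ)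
    (p : UPath I d) (hp : p.val.length ≤ ℓ) :
    p ∈ GaifmanBall (I.unravel d) (uRoot I d) ℓ := by
  induction ℓ generalizing p with
  | zero =>
    have h0 : p.val = [] := List.length_eq_zero_iff.mp (Nat.le_zero.mp hp)
    exact Subtype.ext h0
  | succ n ih =>
    rcases List.eq_nil_or_concat p.val with h0 | ⟨l, a, h0⟩
    · exact Or.inl (ih p (by simp [h0]))
    · rw [List.concat_eq_append] at h0
      have hch : List.IsChain (roleStep I) (d :: p.val) := p.property
      rw [h0, ← List.cons_append, List.isChain_append] at hch
      obtain ⟨hl, -, hs⟩ := hch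
      let q : UPath I d := ⟨l, hl⟩
      have hstep : roleStep I q.last a := by
        apply hs
        · rw [List.getLast?_eq_getLast_of_ne_nil (by simp)]
          rfl
        · simp
      obtain ⟨r, w, hr⟩ := hstep
      refine Or.inr ⟨q, ih q ?_, ?_, r, w, Or.inl ⟨a, hr, h0⟩⟩
      · rw [h0] at hp
        simpa using hp
      · intro hqp
        have : q.val = p.val := congrArg Subtype.val hqp
        rw [h0] at this
        simp [q] at this

lemma bisimAtDepth_pred {NC NR : Type} (I J : S5Interp NC NR) (n : ℕ) (w : I.W) (d : I.Δ)
    (v : J.W) (e : J.Δ) (h : BisimAtDepth I J (n + 1) w d v e) : BisimAtDepth I J n w d v e := by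
  induction n generalizing w d v e with
  | zero => exact h.1
  | succ n ih =>
    obtain ⟨h1, h2, h3, h4, h5⟩ := h
    refine ⟨h1, ?_, ?_, ?_, ?_⟩
    · intro w'
      obtain ⟨v', hv⟩ := h2 w'
      exact ⟨v', ih _ _ _ _ hv⟩
    · intro v'
      obtain ⟨w', hv⟩ := h3 v'
      exact ⟨w', ih _ _ _ _ hv⟩
    · intro r d' hd
      obtain ⟨e', he, hv⟩ := h4 r d' hd
      exact ⟨e', he, ih _ _ _ _ hv⟩
    · intro r d' hd
      obtain ⟨e', he, hv⟩ := h5 r d' hd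
      exact ⟨e', he, ih _ _ _ _ hv⟩

lemma bisimAtDepth_atom {NC NR : Type} (I J : S5Interp NC NR) (n : ℕ) (w : I.W) (d : I.Δ)
    (v : J.W) (e : J.Δ) (h : BisimAtDepth I J n w d v e) (A : NC) :
    d ∈ I.conc A w ↔ e ∈ J.conc A v := by
  cases n with
  | zero => exact h A
  | succ n => exact h.1 A

/-- The winning invariant on the restricted unravellings. -/
def BallRel {NC NR : Type} (I J : S5Interp NC NR) (d : I.Δ) (e : J.Δ) (ℓ : ℕ)
    (w : I.W) (p : UPath I d) (v : J.W) (q : UPath J e) : Prop :=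
  ∃ k, p.val.length + k = ℓ ∧ q.val.length + k = ℓ ∧
    BisimAtDepth I J (2 * k) w p.last v q.last ∧
    ∃ w0 v0, BisimAtDepth I J (2 * k + 1) w0 p.last v0 q.last

lemma bisimilar_balls {NC NR : Type} (I J : S5Interp NC NR) (ℓ : ℕ) (w : I.W) (d : I.Δ)
    (v : J.W) (e : J.Δ) (h : BisimAtDepth I J (2 * ℓ + 1) w d v e) :
    Bisimilar ((I.unravel d).ballRestrict (uRoot I d) ℓ)
      ((J.unravel e).ballRestrict (uRoot J e) ℓ)
      w ((I.unravel d).ballPt (uRoot I d) ℓ) v ((J.unravel e).ballPt (uRoot J e) ℓ) := by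
  refine ⟨fun a b => BallRel I J d e ℓ a.1 a.2.val b.1 b.2.val, ?_,
    ℓ, Nat.zero_add _, Nat.zero_add _, bisimAtDepth_pred _ _ _ _ _ _ _ h, w, v, h⟩
  rintro w ⟨p, hp⟩ v ⟨q, hq⟩ ⟨k, hpk, hqk, hb, w0, v0, hb0⟩
  have hpk : List.length (Subtype.val p) + k = ℓ := hpk
  have hqk : List.length (Subtype.val q) + k = ℓ := hqk
  refine ⟨fun A => bisimAtDepth_atom _ _ _ _ _ _ _ hb A, ?_, ?_, ?_, ?_⟩
  · intro w'
    obtain ⟨v', hv⟩ := hb0.2.1 w'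
    exact ⟨v', k, hpk, hqk, hv, w0, v0, hb0⟩
  · intro v'
    obtain ⟨w', hv⟩ := hb0.2.2.1 v'
    exact ⟨w', k, hpk, hqk, hv, w0, v0, hb0⟩
  · rintro r ⟨p', hp'⟩ ⟨c, hc, hpc⟩
    have hpc : Subtype.val p' = Subtype.val p ++ [c] := hpc
    have hlen : List.length (Subtype.val p') ≤ ℓ := length_le_of_mem_ball I d ℓ p' hp'
    have hlen' : List.length (Subtype.val p') = List.length (Subtype.val p) + 1 := by
      rw [hpc]; simp
    obtain ⟨k, rfl⟩ : ∃ m, k = m + 1 := ⟨k - 1, by omega⟩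
    obtain ⟨c', hc', hbc⟩ := hb.2.2.2.1 r c hc
    let q' : UPath J e := ⟨Subtype.val q ++ [c'], uPath_snoc q c' ⟨r, v, hc'⟩⟩
    have hql : q'.val.length = List.length (Subtype.val q) + 1 := by simp [q']
    have e1 : UPath.last p' = c := uPath_last_of_eq _ _ _ hpc
    have e2 : UPath.last q' = c' := uPath_last_of_eq _ _ _ rfl
    have hbc' : BisimAtDepth I J (2 * k + 1) w (UPath.last p') v (UPath.last q') := by
      rw [e1, e2]; exact hbc
    exact ⟨⟨q', mem_ball_of_length J e ℓ q' (by omega)⟩, ⟨c', hc', rfl⟩, k,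
      by change List.length (Subtype.val p') + k = ℓ; omega,
      by change q'.val.length + k = ℓ; omega,
      bisimAtDepth_pred _ _ _ _ _ _ _ hbc', w, v, hbc'⟩
  · rintro r ⟨q', hq'⟩ ⟨c', hc', hqc⟩
    have hqc : Subtype.val q' = Subtype.val q ++ [c'] := hqc
    have hlen : List.length (Subtype.val q') ≤ ℓ := length_le_of_mem_ball J e ℓ q' hq'
    have hlen' : List.length (Subtype.val q') = List.length (Subtype.val q) + 1 := by
      rw [hqc]; simp
    obtain ⟨k, rfl⟩ : ∃ m, k = m + 1 := ⟨k - 1, by omega⟩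
    obtain ⟨c, hc, hbc⟩ := hb.2.2.2.2 r c' hc'
    let p' : UPath I d := ⟨Subtype.val p ++ [c], uPath_snoc p c ⟨r, w, hc⟩⟩
    have hpl : p'.val.length = List.length (Subtype.val p) + 1 := by simp [p']
    have e1 : UPath.last q' = c' := uPath_last_of_eq _ _ _ hqc
    have e2 : UPath.last p' = c := uPath_last_of_eq _ _ _ rfl
    have hbc' : BisimAtDepth I J (2 * k + 1) w (UPath.last p') v (UPath.last q') := by
      rw [e1, e2]; exact hbc
    exact ⟨⟨p', mem_ball_of_length I d ℓ p' (by omega)⟩, ⟨c, hc, rfl⟩, k,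
      by change p'.val.length + k = ℓ; omega,
      by change List.length (Subtype.val q') + k = ℓ; omega,
      bisimAtDepth_pred _ _ _ _ _ _ _ hbc', w, v, hbc'⟩

/-- a bisimulation-invariant and ℓ-local formula with one free
variable is invariant under depth-(2ℓ+1) bisimilarity. -/
theorem local_to_depth_invariant (NC NR : Type) (φ : FOForm NC NR) (x ℓ : ℕ)
    (hfv : φ.freeVars ⊆ {x})
    (hinv : BisimInvariant φ x) (hloc : IsLocal φ x ℓ)
    (I J : S5Interp NC NR) (w : I.W) (d : I.Δ) (v : J.W) (e : J.Δ)
    (h : BisimAtDepth I J (2 * ℓ + 1) w d v e)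
    (η : ℕ → I.Δ) (θ : ℕ → J.Δ) (hη : η x = d) (hθ : θ x = e) :
    FOForm.Sat I w η φ ↔ FOForm.Sat J v θ φ := by
  have key : ∀ (K : S5Interp NC NR) (u : K.W) (c : K.Δ) (ζ : ℕ → K.Δ), ζ x = c →
      (FOForm.Sat K u ζ φ ↔ FOForm.Sat ((K.unravel c).ballRestrict (uRoot K c) ℓ) u
        (fun _ => (K.unravel c).ballPt (uRoot K c) ℓ) φ) := by
    intro K u c ζ hζ
    refine (hinv K (K.unravel c) u c u (uRoot K c) (bisimilar_unravel K u c) ζ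
      (fun _ => uRoot K c) hζ rfl).trans ?_
    exact hloc (K.unravel c) u (uRoot K c) (fun _ => uRoot K c) _ rfl rfl
  rw [key I w d η hη, key J v e θ hθ]
  exact hinv _ _ _ _ _ _ (bisimilar_balls I J ℓ w d v e h) _ _ rfl rfl
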